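/- arXiv:1912.01994 — 2 statements merged into one kernel-verified Lean document; each statement's English description precedes it below -/
import Mathlib

section
/- Let p be a prime number. For any X ∈ 𝒳_p there exist n ∈ ℕ and a cyclic subgroup H of the multiplicative group (ℤ/p^nℤ)ˣ such that X = ℕ ∩ π_n^{-1}(H). -/
/-!
A number `y` prime to `p` lies in the `p`-adic closure of `a^ℕ` if and only if, for every `m`, it is
congruent modulo `p^m` to a positive power of `a` (`mem_clPow_iff`). So it suffices to find a
level `n` such that being congruent to a power of `a` modulo `p^n` forces the same modulo every
higher `p^m`; then `H` is the subgroup of `(ℤ/p^nℤ)ˣ` generated by the class of `a`.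

Choose `s > 0` with `a^s ≡ 1` modulo `p^2` and write `a^s = 1 + p^n c` with `p ∤ c`; this is possible
because `a^s ≠ 1`, and `n ≥ 2`. Taking `p`-th powers, every `m ≥ n` has an exponent `e`
with `a^e = 1 + p^m c'` and `p ∤ c'` (`exists_pow_eq`); starting from `n ≥ 2` makes this work for
`p = 2` as well. If `y ≡ a^k` modulo `p^m`, then `a^(k + e l) ≡ a^k + p^m c' l a^k` modulo
`p^(m+1)`, and `l` can be chosen so that this is `y`, since `c'` and `a` are units modulo `p`
(`lift_step`).
-/

open TopologicalSpace

/-- The arithmetic progression `a + bℕ₀ = {a + b*n : n ≥ 0}` inside the positive integers. -/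
def golombBasic (a b : ℕ) : Set ℕ+ := {x : ℕ+ | ∃ n : ℕ, (x : ℕ) = a + b * n}

/-- The Golomb topology on the positive integers, generated by the arithmetic
progressions `a + bℕ₀` with coprime `a, b ∈ ℕ`. -/
instance golombTopology : TopologicalSpace ℕ+ :=
  generateFrom {S : Set ℕ+ | ∃ a b : ℕ, 0 < a ∧ 0 < b ∧ Nat.Coprime a b ∧ S = golombBasic a b}

/-- The positive integers not divisible by `p` (the set `ℕ \ pℕ`). -/
abbrev Np (p : ℕ) : Type := {x : ℕ+ // ¬ p ∣ (x : ℕ)}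

/-- The `p`-adic topology on `ℕ \ pℕ`, generated by the traces of the sets
`x + p^nℕ₀`, `x, n ∈ ℕ`. -/
def padicTop (p : ℕ) : TopologicalSpace (Np p) :=
  generateFrom {S : Set (Np p) | ∃ x n : ℕ, 0 < x ∧ 0 < n ∧
    S = {y : Np p | ∃ k : ℕ, ((y : ℕ+) : ℕ) = x + p ^ n * k}}

/-- Closure of a set of positive integers in the `p`-adic topology on `ℕ \ pℕ`,
viewed again as a set of positive integers. -/
def padicClosure (p : ℕ) (A : Set ℕ+) : Set ℕ+ :=
  Subtype.val '' (@closure (Np p) (padicTop p) (Subtype.val ⁻¹' A))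

/-- `a^ℕ = {a^k : k ∈ ℕ}`, the set of positive powers of `a`. -/
def powSet (a : ℕ) : Set ℕ+ := {y : ℕ+ | ∃ k : ℕ, 0 < k ∧ (y : ℕ) = a ^ k}

/-- The closure of `a^ℕ` in the `p`-adic topology on `ℕ \ pℕ`. -/
def clPow (p a : ℕ) : Set ℕ+ := padicClosure p (powSet a)

/-- The family `𝒳_p` of closures of the sets `a^ℕ` for `a ∈ ℕ \ pℕ`, `a ≠ 1`. -/
def XX (p : ℕ) : Set (Set ℕ+) := {X | ∃ a : ℕ, 0 < a ∧ a ≠ 1 ∧ ¬ p ∣ a ∧ X = clPow p a}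

/-- The projection `π_n(X)` of a set of positive integers to `ℤ/p^nℤ`. -/
def pin (p n : ℕ) (X : Set ℕ+) : Set (ZMod (p ^ n)) :=
  (fun y : ℕ+ => ((y : ℕ) : ZMod (p ^ n))) '' X

/-- `n(X)`: the least `n ∈ ℕ` with `X = ℕ ∩ π_n⁻¹(π_n(X))` and `|π_n(X)| ≥ max(p,3)`. -/
noncomputable def nX (p : ℕ) (X : Set ℕ+) : ℕ :=
  sInf {n : ℕ | 0 < n ∧ X = {y : ℕ+ | ((y : ℕ) : ZMod (p ^ n)) ∈ pin p n X} ∧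
    max p 3 ≤ (pin p n X).ncard}

/-- `i(X)`: the index of the subgroup `π_{n(X)}(X)` in the group of units of `ℤ/p^{n(X)}ℤ`. -/
noncomputable def iX (p : ℕ) (X : Set ℕ+) : ℕ :=
  Nat.card ((ZMod (p ^ nX p X))ˣ) / (pin p (nX p X) X).ncard

lemma one_add_pow_eq (x : ℤ) (l : ℕ) : ∃ d : ℤ, (1 + x) ^ l = 1 + l * x + x ^ 2 * d := by
  induction l with
  | zero => exact ⟨0, by simp⟩
  | succ l ih =>
    obtain ⟨d, hd⟩ := ih
    refine ⟨d + l + x * d, ?_⟩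
    rw [pow_succ, hd]
    push_cast
    ring

/-- Taking the `p`-th power raises the exact order of vanishing of `b - 1` by one, provided it
is at least two. -/
lemma pow_prime_step (p : ℕ) (m : ℕ) (hm : 2 ≤ m) (c : ℤ) (hc : ¬ (p : ℤ) ∣ c) :
    ∃ c' : ℤ, ¬ (p : ℤ) ∣ c' ∧ (1 + (p : ℤ) ^ m * c) ^ p = 1 + (p : ℤ) ^ (m + 1) * c' := by
  obtain ⟨d, hd⟩ := one_add_pow_eq ((p : ℤ) ^ m * c) p
  obtain ⟨r, rfl⟩ := Nat.exists_eq_add_of_le' hm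
  refine ⟨c + p * ((p : ℤ) ^ r * c ^ 2 * d), ?_, ?_⟩
  · rwa [dvd_add_left (dvd_mul_right _ _)]
  · rw [hd]
    ring

lemma exists_pow_eq (p : ℕ) (a c : ℤ) (n s : ℕ) (hn : 2 ≤ n)
    (hc : ¬ (p : ℤ) ∣ c) (h : a ^ s = 1 + (p : ℤ) ^ n * c) (m : ℕ) (hm : n ≤ m) :
    ∃ (e : ℕ) (c' : ℤ), ¬ (p : ℤ) ∣ c' ∧ a ^ e = 1 + (p : ℤ) ^ m * c' := by
  induction m, hm using Nat.le_induction with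
  | base => exact ⟨s, c, hc, h⟩
  | succ m hm ih =>
    obtain ⟨e, c₁, hc₁, he⟩ := ih
    obtain ⟨c₂, hc₂, h₂⟩ := pow_prime_step p m (hn.trans hm) c₁ hc₁
    exact ⟨e * p, c₂, hc₂, by rw [pow_mul, he, h₂]⟩

/-- A congruence between `y` and a power of `a` modulo `p^m` lifts to one modulo `p^(m+1)`
when some power of `a` is `1` modulo `p^m` but not modulo `p^(m+1)`. -/
lemma lift_step (p : ℕ) (hp : p.Prime) (a c y : ℤ) (ha : ¬ (p : ℤ) ∣ a) (m e k : ℕ) (hm : 0 < m)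
    (hc : ¬ (p : ℤ) ∣ c) (he : a ^ e = 1 + (p : ℤ) ^ m * c) (hk : 0 < k)
    (hy : (p : ℤ) ^ m ∣ y - a ^ k) :
    ∃ k' : ℕ, 0 < k' ∧ (p : ℤ) ^ (m + 1) ∣ y - a ^ k' := by
  obtain ⟨t, ht⟩ := hy
  have hp' : Prime (p : ℤ) := Nat.prime_iff_prime_int.mp hp
  have hca : ¬ (p : ℤ) ∣ c * a ^ k := hp'.not_dvd_mul hc (fun h => ha (hp'.dvd_of_dvd_pow h))
  have : Fact p.Prime := ⟨hp⟩
  have hu : ((c * a ^ k : ℤ) : ZMod p) ≠ 0 := by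
    rwa [Ne, ZMod.intCast_zmod_eq_zero_iff_dvd]
  -- `l` solves `c * a ^ k * l ≡ t` modulo `p`.
  set l : ℕ := ((t : ZMod p) / ((c * a ^ k : ℤ) : ZMod p)).val with hl
  have hlt : (p : ℤ) ∣ t - c * a ^ k * l := by
    rw [← ZMod.intCast_zmod_eq_zero_iff_dvd, Int.cast_sub, Int.cast_mul, Int.cast_natCast, hl,
      ZMod.natCast_zmod_val, mul_div_cancel₀ _ hu, sub_self]
  obtain ⟨q, hq⟩ := hlt
  obtain ⟨d, hd⟩ := one_add_pow_eq ((p : ℤ) ^ m * c) l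
  obtain ⟨r, rfl⟩ := Nat.exists_eq_add_of_le' hm
  refine ⟨k + e * l, by omega, q - (p : ℤ) ^ r * c ^ 2 * d * a ^ k, ?_⟩
  rw [pow_add, pow_mul, he, hd]
  linear_combination ht + (p : ℤ) ^ (r + 1) * hq

/-- The level at which congruence to a power of `a` becomes decisive. -/
lemma exists_level (p : ℕ) (hp : p.Prime) (a : ℕ) (ha1 : 1 < a) (ha : ¬ p ∣ a) :
    ∃ n : ℕ, 0 < n ∧ ∀ (y : ℤ), (∃ k : ℕ, 0 < k ∧ (p : ℤ) ^ n ∣ y - (a : ℤ) ^ k) →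
      ∀ m : ℕ, ∃ k : ℕ, 0 < k ∧ (p : ℤ) ^ m ∣ y - (a : ℤ) ^ k := by
  have hcop : Nat.Coprime a (p ^ 2) :=
    Nat.Coprime.pow_right _ ((hp.coprime_iff_not_dvd.mpr ha).symm)
  set s := Nat.totient (p ^ 2) with hs
  have hs0 : 0 < s := Nat.totient_pos.mpr (pow_pos hp.pos 2)
  have has : 1 < a ^ s := Nat.one_lt_pow hs0.ne' ha1
  have h2 : p ^ 2 ∣ a ^ s - 1 :=
    (Nat.modEq_iff_dvd' has.le).mp (Nat.ModEq.pow_totient hcop).symm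
  obtain ⟨n, c, hc, hnc⟩ :=
    Nat.exists_eq_pow_mul_and_not_dvd (n := a ^ s - 1) (by omega) p hp.ne_one
  have hn : 2 ≤ n := by
    rw [hnc] at h2
    exact (Nat.pow_dvd_pow_iff_le_right hp.one_lt).mp
      (Nat.Coprime.dvd_of_dvd_mul_right
        (Nat.Coprime.pow_left _ (hp.coprime_iff_not_dvd.mpr hc)) h2)
  have hc' : ¬ (p : ℤ) ∣ (c : ℤ) := by exact_mod_cast hc
  have ha' : ¬ (p : ℤ) ∣ (a : ℤ) := by exact_mod_cast ha
  have hz : (a : ℤ) ^ s = 1 + (p : ℤ) ^ n * c := by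
    have : a ^ s = 1 + p ^ n * c := by omega
    exact_mod_cast this
  refine ⟨n, by omega, fun y hy m => ?_⟩
  rcases le_total m n with hmn | hmn
  · obtain ⟨k, hk, hd⟩ := hy
    exact ⟨k, hk, (pow_dvd_pow _ hmn).trans hd⟩
  · induction m, hmn using Nat.le_induction with
    | base => exact hy
    | succ m hm ih =>
      obtain ⟨k, hk, hd⟩ := ih
      obtain ⟨e, c₁, hc₁, he⟩ := exists_pow_eq p a c n s hn hc' hz m hm
      exact lift_step p hp a c₁ y ha' m e k (by omega) hc₁ he hk hd

/-- Every open set of the `p`-adic topology contains a progression `y + p^m ℕ₀` around each of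
its points `y`. -/
lemma exists_progression_subset (p : ℕ) (U : Set (Np p)) (hU : @IsOpen (Np p) (padicTop p) U)
    (y : Np p) (hy : y ∈ U) :
    ∃ m : ℕ, ∀ z : Np p, (∃ k : ℕ, ((z : ℕ+) : ℕ) = ((y : ℕ+) : ℕ) + p ^ m * k) → z ∈ U := by
  change GenerateOpen _ U at hU
  induction hU with
  | basic S hS =>
    obtain ⟨x, n, -, -, rfl⟩ := hS
    obtain ⟨j, hj⟩ := hy
    refine ⟨n, ?_⟩
    rintro z ⟨k, hk⟩
    exact ⟨j + k, by rw [hk, hj]; ring⟩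
  | univ => exact ⟨0, fun _ _ => trivial⟩
  | inter S T _ _ ihS ihT =>
    obtain ⟨m₁, h₁⟩ := ihS hy.1
    obtain ⟨m₂, h₂⟩ := ihT hy.2
    refine ⟨m₁ + m₂, ?_⟩
    rintro z ⟨k, hk⟩
    exact ⟨h₁ z ⟨p ^ m₂ * k, by rw [hk]; ring⟩, h₂ z ⟨p ^ m₁ * k, by rw [hk]; ring⟩⟩
  | sUnion 𝒮 _ ih =>
    obtain ⟨S, hS, hyS⟩ := hy
    obtain ⟨m, hm⟩ := ih S hS hyS
    exact ⟨m, fun z hz => ⟨S, hS, hm z hz⟩⟩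

lemma mem_clPow_iff (p : ℕ) (hp : p.Prime) (a : ℕ) (ha1 : 1 < a) (ha : ¬ p ∣ a) (y : ℕ+) :
    y ∈ clPow p a ↔ ∀ m : ℕ, ∃ k : ℕ, 0 < k ∧ (p : ℤ) ^ m ∣ ((y : ℕ) : ℤ) - (a : ℤ) ^ k := by
  constructor
  · rintro ⟨z, hz, rfl⟩ m
    -- The generating sets `x + p^n ℕ₀` require `n > 0`, hence `m + 1`.
    have hopen : @IsOpen (Np p) (padicTop p)
        {w : Np p | ∃ k : ℕ, ((w : ℕ+) : ℕ) = ((z : ℕ+) : ℕ) + p ^ (m + 1) * k} :=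
      GenerateOpen.basic _ ⟨_, m + 1, z.1.pos, m.succ_pos, rfl⟩
    obtain ⟨w, ⟨j, hj⟩, k, hk, hw⟩ := (@mem_closure_iff _ (padicTop p) _ _).mp hz _ hopen ⟨0, by simp⟩
    refine ⟨k, hk, -(p * j), ?_⟩
    have : ((a ^ k : ℕ) : ℤ) = ((z.1 : ℕ) + p ^ (m + 1) * j : ℕ) := by rw [← hw, hj]
    push_cast at this
    rw [this]
    ring
  · intro h
    have hp' : Prime (p : ℤ) := Nat.prime_iff_prime_int.mp hp
    have hy : ¬ p ∣ (y : ℕ) := by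
      intro hdvd
      obtain ⟨k, -, hd⟩ := h 1
      have h1 : (p : ℤ) ∣ (a : ℤ) ^ k :=
        (dvd_sub_right (Int.natCast_dvd_natCast.mpr hdvd)).mp (by simpa using hd)
      exact ha (Int.natCast_dvd_natCast.mp (hp'.dvd_of_dvd_pow h1))
    refine ⟨⟨y, hy⟩, (@mem_closure_iff _ (padicTop p) _ _).mpr fun U hU hyU => ?_, rfl⟩
    obtain ⟨m, hm⟩ := exists_progression_subset p U hU _ hyU
    obtain ⟨k, hk, hd⟩ := h m
    have hcop : Nat.Coprime a (p ^ m) :=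
      Nat.Coprime.pow_right _ ((hp.coprime_iff_not_dvd.mpr ha).symm)
    -- Adding a multiple of `φ(p^m)` to the exponent makes the power at least `y`, so that it
    -- lies in the one-sided progression `y + p^m ℕ₀`.
    set K := k + Nat.totient (p ^ m) * y with hK
    have htot : 0 < Nat.totient (p ^ m) := Nat.totient_pos.mpr (pow_pos hp.pos m)
    have hle : (y : ℕ) ≤ a ^ K :=
      calc (y : ℕ) ≤ Nat.totient (p ^ m) * y := Nat.le_mul_of_pos_left _ htot
        _ ≤ K := Nat.le_add_left _ _
        _ ≤ a ^ K := (Nat.lt_pow_self ha1).le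
    have hmod : (y : ℕ) ≡ a ^ K [MOD p ^ m] := by
      have h1 : (y : ℕ) ≡ a ^ k [MOD p ^ m] := by
        refine (Nat.modEq_iff_dvd.mpr ?_).symm
        exact_mod_cast hd
      have h2 : a ^ K ≡ a ^ k * 1 ^ (y : ℕ) [MOD p ^ m] := by
        rw [hK, pow_add, pow_mul]
        exact Nat.ModEq.mul_left _ ((Nat.ModEq.pow_totient hcop).pow _)
      rw [one_pow, mul_one] at h2
      exact h1.trans h2.symm
    obtain ⟨j, hj⟩ := (Nat.modEq_iff_dvd' hle).mp hmod
    have hnd : ¬ p ∣ a ^ K := fun hd => ha (hp.dvd_of_dvd_pow hd)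
    refine ⟨⟨⟨a ^ K, by positivity⟩, hnd⟩, hm _ ⟨j, ?_⟩, K, by omega, rfl⟩
    change a ^ K = (y : ℕ) + p ^ m * j
    omega

/-- For any `X ∈ 𝒳_p` there exist `n ∈ ℕ` and a cyclic subgroup `H` of `(ℤ/p^nℤ)ˣ`
such that `X = ℕ ∩ π_n⁻¹(H)`. -/
theorem XX_eq_preimage_cyclic (p : ℕ) (hp : p.Prime) (X : Set ℕ+) (hX : X ∈ XX p) :
    ∃ (n : ℕ) (H : Subgroup ((ZMod (p ^ n))ˣ)), 0 < n ∧ IsCyclic H ∧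
      X = {y : ℕ+ | ∃ u : (ZMod (p ^ n))ˣ, u ∈ H ∧ ((y : ℕ) : ZMod (p ^ n)) = (u : ZMod (p ^ n))} := by
  obtain ⟨a, ha0, ha1, ha, rfl⟩ := hX
  have ha1 : 1 < a := by omega
  obtain ⟨n, hn, hlev⟩ := exists_level p hp a ha1 ha
  have hcop : Nat.Coprime a (p ^ n) :=
    Nat.Coprime.pow_right _ ((hp.coprime_iff_not_dvd.mpr ha).symm)
  have : NeZero (p ^ n) := ⟨(pow_pos hp.pos n).ne'⟩
  set g := ZMod.unitOfCoprime a hcop with hg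
  have hgk : ∀ k : ℕ, ((g ^ k : (ZMod (p ^ n))ˣ) : ZMod (p ^ n)) = ((a ^ k : ℕ) : ZMod (p ^ n)) := by
    intro k
    simp [hg]
  have hdvd : ∀ (y : ℕ+) (k : ℕ), (p : ℤ) ^ n ∣ ((y : ℕ) : ℤ) - (a : ℤ) ^ k ↔
      ((y : ℕ) : ZMod (p ^ n)) = ((g ^ k : (ZMod (p ^ n))ˣ) : ZMod (p ^ n)) := by
    intro y k
    rw [hgk, eq_comm, ZMod.natCast_eq_natCast_iff, Nat.modEq_iff_dvd]
    push_cast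
    rfl
  refine ⟨n, Subgroup.zpowers g, hn, inferInstance, ?_⟩
  ext y
  rw [mem_clPow_iff p hp a ha1 ha]
  constructor
  · intro h
    obtain ⟨k, -, hd⟩ := h n
    exact ⟨g ^ k, Subgroup.npow_mem_zpowers g k, (hdvd y k).mp hd⟩
  · rintro ⟨u, hu, hyu⟩
    obtain ⟨k, rfl⟩ := (mem_powers_iff_mem_zpowers.mpr hu)
    -- The exponent `k` may be `0`; adding the order of `g` makes it positive.
    refine hlev y ⟨k + orderOf g, by have := orderOf_pos g; omega, (hdvd y _).mpr ?_⟩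
    rw [pow_add, pow_orderOf_eq_one, mul_one]
    exact hyu
end

section
/- Let p be a prime number. For any n ∈ ℕ and any cyclic subgroup H of (ℤ/p^nℤ)ˣ of order |H| ≥ max(p,3), there exists a number a ∈ ℕ \ pℕ with a ≠ 1 such that ℕ ∩ π_n^{-1}(H) = cl(a^ℕ), the closure of a^ℕ in the p-adic topology on ℕ \ pℕ; in particular ℕ ∩ π_n^{-1}(H) ∈ 𝒳_p. -/
/-!
Let `a` be a positive integer representing a generator of `H`, and `N = |H|`. A point `y` lies in
`cl(a^ℕ)` iff for every `m` some power `a^k ≥ y` is congruent to `y` modulo `p^m`, so the claim is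
that a congruence `y ≡ a^k` modulo `p^n` can be refined to any modulus `p^m`.

The order `N` divides `p^(n-1) (p-1)` and is at least `p`, so `p ∣ N`, and `4 ∣ N` when `p = 2`.
Put `x = a^(N/p)`. Then `x ≡ 1` modulo `p` (modulo `4` when `p = 2`), and `x ≢ 1` modulo `p^n` while
`x^p ≡ 1` modulo `p^n`. Raising such an `x` to the power `p` increases the valuation of `x - 1` by
exactly one, hence `a^N - 1` has valuation exactly `n` (`exact_val`), and `a^(N p^m) - 1` has
valuation exactly `n + m` (`pow_lift`). Multiplying `a^k` by powers of `a^(N p^m)` therefore reaches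
every lift modulo `p^(n+m+1)` of its class modulo `p^(n+m)`, which is the induction step of
`approx`.
-/

open TopologicalSpace

/-- Raising `1 + p^v w` to the power `p^m` increases the valuation of its difference with `1` by
exactly `m`. The hypothesis `v + 2 ≤ p * v` means `v ≥ 1`, and `v ≥ 2` if `p = 2`. -/
lemma pow_lift {p : ℕ} (hp : p.Prime) {v : ℕ} (hv : v + 2 ≤ p * v) {w : ℤ}
    (hw : ¬ (p : ℤ) ∣ w) (m : ℕ) :
    ∃ w' : ℤ, ¬ (p : ℤ) ∣ w' ∧ (1 + (p : ℤ) ^ v * w) ^ (p ^ m) = 1 + (p : ℤ) ^ (v + m) * w' := by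
  have hv0 : v ≠ 0 := by rintro rfl; simp at hv
  obtain ⟨y, hy⟩ := ZMod.exists_one_add_mul_pow_prime_pow_eq (R := ℤ) (u := (p : ℤ) ^ v)
    (v := (p : ℤ)) hp (dvd_pow_self _ hv0)
    (by
      rw [← pow_succ', ← pow_succ, ← pow_mul, mul_comm v]
      exact pow_dvd_pow _ hv) w m
  refine ⟨w + p * y, fun h => hw ?_, ?_⟩
  · exact (dvd_add_left (dvd_mul_right _ _)).1 h
  · rw [hy, pow_add]; ring

lemma one_add_pow_eq_s9 (P w : ℤ) (j : ℕ) :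
    ∃ z, (1 + P * w) ^ j = 1 + j * (P * w) + P ^ 2 * z := by
  induction j with
  | zero => exact ⟨0, by simp⟩
  | succ j ih =>
    obtain ⟨z, hz⟩ := ih
    refine ⟨z * (1 + P * w) + j * w ^ 2, ?_⟩
    rw [pow_succ, hz]; push_cast; ring

lemma exists_mul_congr {p : ℕ} (hp : p.Prime) {c : ℤ} (hc : ¬ (p : ℤ) ∣ c) (t : ℤ) :
    ∃ j : ℕ, (p : ℤ) ∣ t - c * j := by
  have hco : IsCoprime (p : ℤ) c :=
    (Prime.coprime_iff_not_dvd (Nat.prime_iff_prime_int.1 hp)).2 hc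
  obtain ⟨r, s, hrs⟩ := hco
  have hp0 : (p : ℤ) ≠ 0 := by exact_mod_cast hp.ne_zero
  refine ⟨((s * t) % p).toNat, ?_⟩
  rw [Int.toNat_of_nonneg (Int.emod_nonneg _ hp0), Int.emod_def]
  refine ⟨t * r + c * (s * t / p), ?_⟩
  linear_combination (-t) * hrs

/-- If `a^N - 1` has valuation exactly `n`, then every integer congruent to a power of `a` modulo
`p^n` is congruent to a power of `a` modulo each higher power of `p`. -/
lemma approx {p : ℕ} (hp : p.Prime) {n : ℕ} (hn : n + 2 ≤ p * n) {a : ℤ} (ha : ¬ (p : ℤ) ∣ a)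
    {N : ℕ} {u : ℤ} (hu : ¬ (p : ℤ) ∣ u) (haN : a ^ N = 1 + (p : ℤ) ^ n * u)
    {y : ℤ} {k : ℕ} (hk : (p : ℤ) ^ n ∣ y - a ^ k) (m : ℕ) :
    ∃ k' : ℕ, (p : ℤ) ^ (n + m) ∣ y - a ^ k' := by
  have hpp := Nat.prime_iff_prime_int.1 hp
  have hn0 : 1 ≤ n := by
    rcases Nat.eq_zero_or_pos n with rfl | h
    · simp at hn
    · exact h
  induction m with
  | zero => exact ⟨k, hk⟩
  | succ m ih =>
    obtain ⟨k', t, ht⟩ := ih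
    obtain ⟨w, hw, hwe⟩ := pow_lift hp hn hu m
    have hc : ¬ (p : ℤ) ∣ a ^ k' * w := by
      intro h
      rcases hpp.dvd_or_dvd h with h | h
      · exact ha (hpp.dvd_of_dvd_pow h)
      · exact hw h
    obtain ⟨j, s, hs⟩ := exists_mul_congr hp hc t
    obtain ⟨z, hz⟩ := one_add_pow_eq_s9 ((p : ℤ) ^ (n + m)) w j
    refine ⟨k' + N * p ^ m * j, ?_⟩
    have h1 : a ^ (k' + N * p ^ m * j)
        = a ^ k' * (1 + j * ((p : ℤ) ^ (n + m) * w) + ((p : ℤ) ^ (n + m)) ^ 2 * z) := by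
      rw [pow_add, pow_mul, pow_mul, haN, hwe, hz]
    obtain ⟨e, he⟩ : ∃ e, n + m = e + 1 := ⟨n + m - 1, by omega⟩
    rw [h1, ← add_assoc]
    refine ⟨s - a ^ k' * (p : ℤ) ^ e * z, ?_⟩
    rw [he] at ht ⊢
    linear_combination ht + (p : ℤ) ^ (e + 1) * hs

/-- If `a^(q p) ≡ 1` but `a^q ≢ 1` modulo `p^n`, with `q` even when `p = 2`, then `a^(q p) - 1` has
valuation exactly `n`; moreover `n + 2 ≤ p * n`, so that `pow_lift` applies to `a^(q p)`. -/
lemma exact_val {p : ℕ} (hp : p.Prime) {n : ℕ} {a : ℤ} {q : ℕ} (ha : ¬ (p : ℤ) ∣ a)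
    (hq2 : p = 2 → Even q) (hn : 0 < n) (h1 : ¬ (p : ℤ) ^ n ∣ a ^ q - 1)
    (h2 : (p : ℤ) ^ n ∣ a ^ (q * p) - 1) :
    n + 2 ≤ p * n ∧ ∃ u : ℤ, ¬ (p : ℤ) ∣ u ∧ a ^ (q * p) = 1 + (p : ℤ) ^ n * u := by
  have hpp := Nat.prime_iff_prime_int.1 hp
  have : Fact p.Prime := ⟨hp⟩
  have hx0 : a ^ q - 1 ≠ 0 := fun h => h1 (h ▸ dvd_zero _)
  have hfin : FiniteMultiplicity (p : ℤ) (a ^ q - 1) :=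
    FiniteMultiplicity.of_prime_left hpp hx0
  obtain ⟨w, hw, hw'⟩ := hfin.exists_eq_pow_mul_and_not_dvd
  set v := multiplicity (p : ℤ) (a ^ q - 1) with hvdef
  have hpx : (p : ℤ) ∣ a ^ q - 1 := by
    have h3 : (p : ℤ) ∣ a ^ (q * p) - 1 := (dvd_pow_self _ hn.ne').trans h2
    rw [← ZMod.intCast_zmod_eq_zero_iff_dvd] at h3 ⊢
    push_cast at h3 ⊢
    rwa [pow_mul, ZMod.pow_card] at h3
  have hv1 : 1 ≤ v := hfin.le_multiplicity_of_pow_dvd (by simpa using hpx)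
  have hv : v + 2 ≤ p * v := by
    by_cases hp2 : p = 2
    · have : 2 ≤ v := by
        apply hfin.le_multiplicity_of_pow_dvd
        obtain ⟨r, hr⟩ := hq2 hp2
        subst hp2
        have hodd : Odd (a ^ r) := by
          apply Odd.pow
          rw [← Int.not_even_iff_odd, even_iff_two_dvd]
          exact ha
        obtain ⟨b, hb⟩ := hodd
        refine ⟨b ^ 2 + b, ?_⟩
        rw [hr, pow_add, hb]; push_cast; ring
      subst hp2; omega
    · have : 3 ≤ p := by have := hp.two_le; omega
      nlinarith
  have hvn : v < n := by
    by_contra hcon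
    exact h1 ((pow_dvd_pow _ (not_lt.1 hcon)).trans ⟨w, hw⟩)
  obtain ⟨u, hu, hue⟩ := pow_lift hp hv hw' 1
  have hxe : a ^ q = 1 + (p : ℤ) ^ v * w := by linear_combination hw
  have he : a ^ (q * p) = 1 + (p : ℤ) ^ (v + 1) * u := by
    rw [pow_mul, hxe]; simpa using hue
  have hnv : n = v + 1 := by
    by_contra hne
    have hlt : v + 1 + 1 ≤ n := by omega
    have h4 : (p : ℤ) ^ (v + 1 + 1) ∣ (p : ℤ) ^ (v + 1) * u := by
      have := (pow_dvd_pow (p : ℤ) hlt).trans h2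
      rwa [he, add_sub_cancel_left] at this
    rw [pow_succ _ (v + 1)] at h4
    exact hu ((mul_dvd_mul_iff_left (pow_ne_zero _ hpp.ne_zero)).1 h4)
  rw [hnv]
  refine ⟨?_, u, hu, he⟩
  have := hp.two_le
  nlinarith

/-- The sets `y + p^m ℕ₀` with `m > 0` form a neighbourhood base at `y` of the `p`-adic topology. -/
lemma mem_padicClosure_iff {p : ℕ} (A : Set ℕ+) (hA : ∀ x ∈ A, ¬ p ∣ (x : ℕ)) (y : ℕ+) :
    y ∈ padicClosure p A ↔
      ¬ p ∣ (y : ℕ) ∧ ∀ m : ℕ, 0 < m → ∃ x ∈ A, ∃ k : ℕ, (x : ℕ) = y + p ^ m * k := by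
  let := padicTop p
  constructor
  · rintro ⟨⟨y', hy'⟩, hcl, rfl⟩
    refine ⟨hy', fun m hm => ?_⟩
    obtain ⟨x, ⟨k, hk⟩, hxA⟩ := mem_closure_iff.1 hcl
      {z : Np p | ∃ k : ℕ, ((z : ℕ+) : ℕ) = (y' : ℕ) + p ^ m * k}
      (isOpen_generateFrom_of_mem ⟨y', m, y'.pos, hm, rfl⟩) ⟨0, by simp⟩
    exact ⟨x, hxA, k, hk⟩
  · rintro ⟨hy, h⟩
    refine ⟨⟨y, hy⟩, ?_, rfl⟩
    -- Every open set containing `y` contains some `y + p^m ℕ₀`.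
    have key : ∀ U : Set (Np p), GenerateOpen {S : Set (Np p) | ∃ x n : ℕ, 0 < x ∧ 0 < n ∧
        S = {y : Np p | ∃ k : ℕ, ((y : ℕ+) : ℕ) = x + p ^ n * k}} U → (⟨y, hy⟩ : Np p) ∈ U →
        ∃ m : ℕ, 0 < m ∧ ∀ z : Np p, (∃ k : ℕ, ((z : ℕ+) : ℕ) = (y : ℕ) + p ^ m * k) → z ∈ U := by
      intro U hU
      induction hU with
      | basic S hS =>
        obtain ⟨x, n, -, hn, rfl⟩ := hS
        rintro ⟨j, hj⟩
        refine ⟨n, hn, ?_⟩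
        rintro z ⟨k, hk⟩
        refine ⟨j + k, ?_⟩
        simp only at hj
        rw [hk, hj]; ring
      | univ => exact fun _ => ⟨1, one_pos, fun _ _ => trivial⟩
      | inter S T _ _ ihS ihT =>
        rintro ⟨hS, hT⟩
        obtain ⟨m₁, h₁, hS⟩ := ihS hS
        obtain ⟨m₂, -, hT⟩ := ihT hT
        refine ⟨m₁ + m₂, by omega, ?_⟩
        rintro z ⟨k, hk⟩
        exact ⟨hS z ⟨p ^ m₂ * k, by rw [hk]; ring⟩, hT z ⟨p ^ m₁ * k, by rw [hk]; ring⟩⟩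
      | sUnion F _ ih =>
        rintro ⟨S, hSF, hS⟩
        obtain ⟨m, hm, hS⟩ := ih S hSF hS
        exact ⟨m, hm, fun z hz => ⟨S, hSF, hS z hz⟩⟩
    rw [mem_closure_iff]
    intro U hU hyU
    obtain ⟨m, hm, hmU⟩ := key U hU hyU
    obtain ⟨x, hxA, hx⟩ := h m hm
    exact ⟨⟨x, hA x hxA⟩, hmU _ hx, hxA⟩

/-- A congruence of `y` with some power of `a` modulo `p^m` also holds for a power exceeding `y`. -/
lemma exists_large_pow {p : ℕ} (hp : p.Prime) {a y m k : ℕ} (ha : ¬ p ∣ a) (ha1 : 1 < a)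
    (h : (p : ℤ) ^ m ∣ (y : ℤ) - (a : ℤ) ^ k) :
    ∃ k' j : ℕ, 0 < k' ∧ a ^ k' = y + p ^ m * j := by
  have hco : Nat.Coprime a (p ^ m) := ((hp.coprime_iff_not_dvd.2 ha).symm).pow_right m
  have hT : 0 < (p ^ m).totient := Nat.totient_pos.2 (pow_pos hp.pos m)
  set T := (p ^ m).totient
  set k' := k + T * (y + 1) with hk'
  have hle : y < k' := by nlinarith
  have hmod : y ≡ a ^ k' [MOD p ^ m] := by
    have h1 : y ≡ a ^ k [MOD p ^ m] := by
      refine Nat.ModEq.symm ((Nat.modEq_iff_dvd).2 ?_)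
      push_cast
      exact h
    have h2 : a ^ (T * (y + 1)) ≡ 1 [MOD p ^ m] := by
      rw [pow_mul]
      simpa using (Nat.ModEq.pow_totient hco).pow (y + 1)
    rw [hk', pow_add]
    exact h1.trans (by simpa using h2.symm.mul_left (a ^ k))
  have hlt : k' < a ^ k' := Nat.lt_pow_self ha1
  obtain ⟨j, hj⟩ := (Nat.modEq_iff_dvd' (by omega)).1 hmod
  exact ⟨k', j, by omega, by omega⟩

/-- For any `n ∈ ℕ` and any cyclic subgroup `H` of `(ℤ/p^nℤ)ˣ` of order at least
`max(p,3)`, there is `a ∈ ℕ \ pℕ`, `a ≠ 1`, with `ℕ ∩ π_n⁻¹(H) = cl(a^ℕ)`; in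
particular `ℕ ∩ π_n⁻¹(H) ∈ 𝒳_p`. -/
theorem preimage_cyclic_mem_XX (p : ℕ) (hp : p.Prime) (n : ℕ) (hn : 0 < n)
    (H : Subgroup ((ZMod (p ^ n))ˣ)) (hc : IsCyclic H) (hcard : max p 3 ≤ Nat.card H) :
    (∃ a : ℕ, 0 < a ∧ a ≠ 1 ∧ ¬ p ∣ a ∧
      {y : ℕ+ | ∃ u : (ZMod (p ^ n))ˣ, u ∈ H ∧ ((y : ℕ) : ZMod (p ^ n)) = (u : ZMod (p ^ n))}
        = clPow p a) ∧
    {y : ℕ+ | ∃ u : (ZMod (p ^ n))ˣ, u ∈ H ∧ ((y : ℕ) : ZMod (p ^ n)) = (u : ZMod (p ^ n))}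
      ∈ XX p := by
  suffices hmain : ∃ a : ℕ, 0 < a ∧ a ≠ 1 ∧ ¬ p ∣ a ∧
      {y : ℕ+ | ∃ u : (ZMod (p ^ n))ˣ, u ∈ H ∧ ((y : ℕ) : ZMod (p ^ n)) = (u : ZMod (p ^ n))}
        = clPow p a from ⟨hmain, hmain⟩
  have : NeZero (p ^ n) := ⟨pow_ne_zero _ hp.ne_zero⟩
  have hpp := Nat.prime_iff_prime_int.1 hp
  obtain ⟨h, hh⟩ := (Subgroup.isCyclic_iff_exists_zpowers_eq_top H).1 hc
  have hord : orderOf h = Nat.card H := by rw [← hh, Nat.card_zpowers]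
  have hmem : ∀ u : (ZMod (p ^ n))ˣ, u ∈ H ↔ ∃ k : ℕ, h ^ k = u := by
    intro u
    rw [← hh, mem_zpowers_iff_mem_range_orderOf]
    simp only [Finset.mem_image, Finset.mem_range]
    constructor
    · rintro ⟨k, -, hk⟩; exact ⟨k, hk⟩
    · rintro ⟨k, rfl⟩
      exact ⟨k % orderOf h, Nat.mod_lt _ (orderOf_pos h), pow_mod_orderOf h k⟩
  set a : ℕ := (h : ZMod (p ^ n)).val with ha_def
  have hah : (a : ZMod (p ^ n)) = h := by simp [ha_def]
  have hpa : ¬ p ∣ a := by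
    have hco := ZMod.val_coe_unit_coprime h
    exact (hp.coprime_iff_not_dvd).1
      (Nat.Coprime.coprime_dvd_left (dvd_pow_self p hn.ne') hco.symm)
  have ha0 : 0 < a := Nat.pos_of_ne_zero fun h0 => hpa (h0 ▸ dvd_zero p)
  have ha1 : a ≠ 1 := by
    intro h1
    have : h = 1 := by
      apply Units.ext
      rw [← hah, h1]; simp
    rw [this, orderOf_one] at hord
    have := le_max_right p 3
    omega
  have hpow : ∀ k : ℕ, (p : ℤ) ^ n ∣ (a : ℤ) ^ k - 1 ↔ orderOf h ∣ k := by
    intro k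
    rw [orderOf_dvd_iff_pow_eq_one, ← Units.val_inj, Units.val_pow_eq_pow_val, ← hah,
      ← Nat.cast_pow, ← ZMod.intCast_zmod_eq_zero_iff_dvd]
    push_cast
    rw [sub_eq_zero]
  have hN : orderOf h ∣ p ^ (n - 1) * (p - 1) := by
    have := orderOf_dvd_card (x := h)
    rwa [ZMod.card_units_eq_totient, Nat.totient_prime_pow hp hn] at this
  have hNp : max p 3 ≤ orderOf h := hord ▸ hcard
  -- A divisor of `p^(n-1) (p-1)` prime to `p` is at most `p - 1`.
  have hpN : p ∣ orderOf h := by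
    by_contra hcon
    have hco : Nat.Coprime (orderOf h) (p ^ (n - 1)) :=
      ((hp.coprime_iff_not_dvd.2 hcon).symm).pow_right _
    have h1 := Nat.le_of_dvd (Nat.sub_pos_of_lt hp.one_lt) (hco.dvd_of_dvd_mul_left hN)
    have h2 := le_max_left p 3
    have h3 := hp.one_lt
    omega
  obtain ⟨q, hq⟩ := hpN
  have hq0 : 0 < q := Nat.pos_of_ne_zero fun h0 => by
    have := orderOf_pos h
    simp [hq, h0] at this
  have hq2 : p = 2 → Even q := by
    intro hp2
    have h1 : q ∣ 2 ^ (n - 1) := by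
      have : q ∣ orderOf h := ⟨p, by rw [hq, mul_comm]⟩
      simpa [hp2] using this.trans hN
    obtain ⟨i, -, hi⟩ := (Nat.dvd_prime_pow Nat.prime_two).1 h1
    rcases i with _ | i
    · rw [hq, hp2, hi] at hNp; simp at hNp
    · rw [hi]; exact ⟨2 ^ i, by ring⟩
  have hpaz : ¬ (p : ℤ) ∣ (a : ℤ) := by exact_mod_cast hpa
  obtain ⟨hn2, u, hu, hue⟩ := exact_val hp (n := n) (a := a) (q := q) hpaz hq2 hn
    (by
      rw [hpow, hq]
      intro hd
      have := Nat.le_of_dvd hq0 hd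
      have := hp.two_le
      nlinarith)
    (by rw [hpow, hq, mul_comm])
  refine ⟨a, ha0, ha1, hpa, ?_⟩
  ext y
  have hApow : ∀ x ∈ powSet a, ¬ p ∣ (x : ℕ) := by
    rintro x ⟨k, -, hk⟩ hd
    rw [hk] at hd
    exact hpa (hp.dvd_of_dvd_pow hd)
  rw [clPow, mem_padicClosure_iff _ hApow]
  constructor
  · rintro ⟨g, hg, hyg⟩
    obtain ⟨k, rfl⟩ := (hmem g).1 hg
    have hyk : (p : ℤ) ^ n ∣ (y : ℕ) - (a : ℤ) ^ k := by
      rw [← Nat.cast_pow, ← ZMod.intCast_zmod_eq_zero_iff_dvd]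
      push_cast
      rw [hyg, hah]; simp
    refine ⟨fun hd => hpaz ?_, fun m hm => ?_⟩
    · have h1 : (p : ℤ) ∣ (y : ℕ) - (a : ℤ) ^ k := (dvd_pow_self _ hn.ne').trans hyk
      have h2 : (p : ℤ) ∣ (y : ℕ) := by exact_mod_cast hd
      exact hpp.dvd_of_dvd_pow ((dvd_sub_right h2).1 h1)
    · obtain ⟨k', hk'⟩ := approx hp hn2 hpaz hu hue hyk m
      obtain ⟨k₁, j, hk₁, hj⟩ := exists_large_pow hp hpa (by omega)
        ((pow_dvd_pow _ (Nat.le_add_left m n)).trans hk')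
      exact ⟨⟨a ^ k₁, pow_pos ha0 _⟩, ⟨k₁, hk₁, rfl⟩, j, hj⟩
  · rintro ⟨-, hcl⟩
    obtain ⟨x, ⟨k, -, hk⟩, j, hj⟩ := hcl n hn
    refine ⟨h ^ k, (hmem _).2 ⟨k, rfl⟩, ?_⟩
    have := congrArg (Nat.cast (R := ZMod (p ^ n))) (hk.symm.trans hj)
    rw [Nat.cast_add, Nat.cast_mul, ZMod.natCast_self, zero_mul, add_zero, Nat.cast_pow, hah] at this
    rw [← this, Units.val_pow_eq_pow_val]
end
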